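/- Let 𝓕 be an EKR-set of chambers of maximum cardinality among all EKR-sets of chambers. (a) If S₁ and S₂ are heavy totally isotropic subspaces (of any dimensions), then S₁ ∩ S₂^⊥ ≠ {0}. (b) If S is a heavy totally isotropic s-space, then every chamber C ∈ 𝓕 satisfies C_s^⊥ ∩ S ≠ {0}. -/

import Mathlib

open scoped Classical

open Module

section Defs

variable {F V : Type} [Field F] [AddCommGroup V] [Module F V]

/-- The orthogonal complement of a subspace with respect to a bilinear form. -/
def bperp (B : V →ₗ[F] V →ₗ[F] F) (W : Submodule F V) : Submodule F V :=
  ⨅ w ∈ W, LinearMap.ker (B w)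

/-- A subspace is totally isotropic for `B`. -/
def IsTotIso (B : V →ₗ[F] V →ₗ[F] F) (W : Submodule F V) : Prop :=
  ∀ u ∈ W, ∀ w ∈ W, B u w = 0

/-- `B` is an alternating form. -/
def IsAltForm (B : V →ₗ[F] V →ₗ[F] F) : Prop := ∀ v, B v v = 0

/-- `B` is nondegenerate. -/
def NondegForm (B : V →ₗ[F] V →ₗ[F] F) : Prop := ∀ v, (∀ w, B v w = 0) → v = 0

/-- A flag of type `J` of totally isotropic subspaces: entries outside `J` are `⊥`. -/
structure SFlag (B : V →ₗ[F] V →ₗ[F] F) (J : Finset ℕ) where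
  space : ℕ → Submodule F V
  isotropic : ∀ i ∈ J, IsTotIso B (space i)
  finrank_eq : ∀ i ∈ J, Module.finrank F (space i) = i
  mono : ∀ i ∈ J, ∀ j ∈ J, i ≤ j → space i ≤ space j
  eq_bot : ∀ i, i ∉ J → space i = ⊥

/-- Two flags of type `J` are opposite. -/
def FlagOpp {B : V →ₗ[F] V →ₗ[F] F} {J : Finset ℕ} (C C' : SFlag B J) : Prop :=
  ∀ i ∈ J, bperp B (C.space i) ⊓ C'.space i = ⊥

/-- An EKR-set of flags of type `J`: no two members are opposite. -/
def IsEKRFlags {B : V →ₗ[F] V →ₗ[F] F} {J : Finset ℕ} (𝓕 : Set (SFlag B J)) : Prop :=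
  ∀ C ∈ 𝓕, ∀ C' ∈ 𝓕, ¬ FlagOpp C C'

/-- Two subspaces are opposite. -/
def SpaceOpp (B : V →ₗ[F] V →ₗ[F] F) (S T : Submodule F V) : Prop :=
  bperp B S ⊓ T = ⊥

/-- An EKR-set of totally isotropic `s`-spaces: no two members are opposite. -/
def IsEKRSpaces (B : V →ₗ[F] V →ₗ[F] F) (s : ℕ) (𝓕 : Set (Submodule F V)) : Prop :=
  (∀ S ∈ 𝓕, IsTotIso B S ∧ Module.finrank F S = s) ∧
    ∀ S ∈ 𝓕, ∀ T ∈ 𝓕, ¬ SpaceOpp B S T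

/-- An `s`-space `S` is heavy with respect to a set `𝓕` of flags: every flag whose
`s`-th entry equals `S` belongs to `𝓕`. -/
def Heavy {B : V →ₗ[F] V →ₗ[F] F} {J : Finset ℕ} (𝓕 : Set (SFlag B J)) (s : ℕ)
    (S : Submodule F V) : Prop :=
  ∀ C : SFlag B J, C.space s = S → C ∈ 𝓕

end Defs

/-- `z_k = ∏_{i=1}^k (q^i-1)/(q-1)`. -/
noncomputable def zpol (q k : ℕ) : ℝ :=
  ∏ i ∈ Finset.Icc 1 k, ((q : ℝ) ^ i - 1) / ((q : ℝ) - 1)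

/-- The Gaussian binomial coefficient `[m choose k]_q` as a real number. -/
noncomputable def gaussq (q m k : ℕ) : ℝ :=
  ∏ i ∈ Finset.Icc 1 k, ((q : ℝ) ^ (m - k + i) - 1) / ((q : ℝ) ^ i - 1)

/-- `Φ_m^s` in `PS(n,1,q)`: the number of totally isotropic `s`-spaces containing a
fixed totally isotropic `m`-space. -/
noncomputable def PhiP (q n m s : ℕ) : ℝ :=
  gaussq q (n - m) (s - m) * ∏ i ∈ Finset.Icc 1 (s - m), ((q : ℝ) ^ (n - m + 1 - i) + 1)

/-!
Part (b) is a property of every EKR-set: if a heavy `S` were opposite to `C_s`, then growing `S`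
upwards and cutting it down one dimension at a time, always opposite to the subspaces of `C`,
would give a member of the EKR-set opposite to `C`. Part (a) reduces to (b): if `S₁` meets `S₂ᗮ`
trivially, then `S₂` has a subspace `D` opposite to `S₁`, and every flag through `D` and `S₂`
belongs to the EKR-set because `S₂` is heavy.
-/

section Sequences

variable {α : Type*} [Preorder α] {P : ℕ → α → Prop} {s : ℕ} {x : α}

theorem exists_monotone_of_step (hx : P s x)
    (down : ∀ k < s, ∀ y, P (k + 1) y → ∃ z ≤ y, P k z)
    (up : ∀ k ≥ s, ∀ y, P k y → ∃ z ≥ y, P (k + 1) z) :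
    ∃ c : ℕ → α, Monotone c ∧ c s = x ∧ ∀ k, P k (c k) := by
  induction s generalizing P with
  | zero =>
    have : Nonempty α := ⟨x⟩
    choose! next le_next hnext using fun k => up k k.zero_le
    let c : ℕ → α := Nat.rec x next
    have hc : ∀ k, P k (c k) := Nat.rec hx fun k => hnext k (c k)
    exact ⟨c, monotone_nat_of_le_succ fun k => le_next k (c k) (hc k), rfl, hc⟩
  | succ s ih =>
    obtain ⟨c, hmono, hcs, hc⟩ := ih (P := fun k => P (k + 1)) hx
      (fun k hk => down (k + 1) (by lia)) (fun k hk => up (k + 1) (by lia))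
    obtain ⟨z, hz, hPz⟩ := down 0 s.succ_pos (c 0) (hc 0)
    exact ⟨fun k => k.casesOn z c, monotone_nat_of_le_succ (Nat.rec hz fun k _ => hmono k.le_succ),
      hcs, Nat.rec hPz fun k _ => hc k⟩

theorem exists_monotone_of_step_le {n : ℕ} (hs : s ≤ n) (hx : P s x)
    (down : ∀ k < s, ∀ y, P (k + 1) y → ∃ z ≤ y, P k z)
    (up : ∀ k ≥ s, k < n → ∀ y, P k y → ∃ z ≥ y, P (k + 1) z) :
    ∃ c : ℕ → α, Monotone c ∧ c s = x ∧ ∀ k ≤ n, P k (c k) := by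
  refine exists_monotone_of_step (P := fun k y => k ≤ n → P k y) (fun _ => hx) ?_ ?_
  · intro k hk y hy
    obtain ⟨z, hz, hPz⟩ := down k hk y (hy (by lia))
    exact ⟨z, hz, fun _ => hPz⟩
  · intro k hk y hy
    by_cases hkn : k < n
    · obtain ⟨z, hz, hPz⟩ := up k hk hkn y (hy hkn.le)
      exact ⟨z, hz, fun _ => hPz⟩
    · exact ⟨y, le_rfl, fun h => absurd h hkn⟩

end Sequences

section Forms

variable {F V : Type} [Field F] [AddCommGroup V] [Module F V] {B : V →ₗ[F] V →ₗ[F] F}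
  {S T U W : Submodule F V}

theorem bperp_eq_orthogonal (B : V →ₗ[F] V →ₗ[F] F) (W : Submodule F V) :
    bperp B W = LinearMap.BilinForm.orthogonal B W := by
  ext v
  simp [bperp, LinearMap.BilinForm.mem_orthogonal_iff]

theorem mem_bperp {v : V} : v ∈ bperp B W ↔ ∀ w ∈ W, B w v = 0 := by
  rw [bperp_eq_orthogonal, LinearMap.BilinForm.mem_orthogonal_iff]

theorem isTotIso_iff_le_bperp : IsTotIso B W ↔ W ≤ bperp B W :=
  ⟨fun h _ hw => mem_bperp.2 fun u hu => h u hu _ hw, fun h u hu _ hw => mem_bperp.1 (h hw) u hu⟩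

theorem bperp_anti : Antitone (bperp B) := fun _ _ h _ hv =>
  mem_bperp.2 fun w hw => mem_bperp.1 hv w (h hw)

theorem IsTotIso.mono (hW : IsTotIso B W) (h : U ≤ W) : IsTotIso B U :=
  fun u hu w hw => hW u (h hu) w (h hw)

theorem IsTotIso.sup_span_singleton (hB : B.IsAlt) (hW : IsTotIso B W) {d : V}
    (hd : d ∈ bperp B W) : IsTotIso B (W ⊔ F ∙ d) := by
  intro u hu w hw
  obtain ⟨u, huW, _, hu', rfl⟩ := Submodule.mem_sup.1 hu
  obtain ⟨w, hwW, _, hw', rfl⟩ := Submodule.mem_sup.1 hw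
  obtain ⟨a, rfl⟩ := Submodule.mem_span_singleton.1 hu'
  obtain ⟨b, rfl⟩ := Submodule.mem_span_singleton.1 hw'
  have hud : B u d = 0 := mem_bperp.1 hd u huW
  have hdw : B d w = 0 := hB.isRefl _ _ (mem_bperp.1 hd w hwW)
  simp [hW u huW w hwW, hud, hdw, hB d]

theorem SpaceOpp.eq_zero (h : SpaceOpp B S T) {x : V} (hxT : x ∈ T)
    (hx : ∀ w ∈ S, B w x = 0) : x = 0 :=
  Submodule.disjoint_def.1 (disjoint_iff.2 h) x (mem_bperp.2 hx) hxT

theorem spaceOpp_of_forall_eq_zero (h : ∀ x ∈ T, (∀ w ∈ S, B w x = 0) → x = 0) :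
    SpaceOpp B S T :=
  (Submodule.eq_bot_iff _).2 fun x hx => h x hx.2 (mem_bperp.1 hx.1)

theorem SpaceOpp.mono_right (h : SpaceOpp B S T) (hU : U ≤ T) : SpaceOpp B S U :=
  spaceOpp_of_forall_eq_zero fun _ hx => h.eq_zero (hU hx)

section FiniteDimensional

variable [FiniteDimensional F V]

theorem finrank_le_finrank_add_finrank_bperp (B : V →ₗ[F] V →ₗ[F] F) (W : Submodule F V) :
    finrank F V ≤ finrank F W + finrank F (bperp B W) := by
  rw [bperp_eq_orthogonal, LinearMap.BilinForm.finrank_add_finrank_orthogonal']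
  exact Nat.le_add_right _ _

theorem IsTotIso.lt_bperp (hW : IsTotIso B W) (h : 2 * finrank F W < finrank F V) :
    W < bperp B W := by
  refine (isTotIso_iff_le_bperp.1 hW).lt_of_ne fun heq => ?_
  have hperp := finrank_le_finrank_add_finrank_bperp B W
  rw [← heq] at hperp
  lia

theorem SpaceOpp.finrank_le (h : SpaceOpp B S T) : finrank F T ≤ finrank F S := by
  have hdisj := Submodule.finrank_add_finrank_le_of_disjoint (disjoint_iff.2 h)
  have hperp := finrank_le_finrank_add_finrank_bperp B S
  lia

theorem SpaceOpp.exists_le_finrank_eq (hB : B.IsRefl) (h : SpaceOpp B T S) :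
    ∃ D ≤ T, finrank F D = finrank F S ∧ SpaceOpp B D S ∧ SpaceOpp B S D := by
  obtain ⟨D, hdisj, hsup⟩ :=
    IsModularLattice.exists_disjoint_and_sup_eq (inf_le_left : T ⊓ bperp B S ≤ T)
  have hDT : D ≤ T := hsup ▸ le_sup_right
  have hSD : SpaceOpp B S D := spaceOpp_of_forall_eq_zero fun x hxD hx =>
    Submodule.disjoint_def.1 hdisj x ⟨hDT hxD, mem_bperp.2 hx⟩ hxD
  have hDS : SpaceOpp B D S := spaceOpp_of_forall_eq_zero fun x hxS hx =>
    h.eq_zero hxS fun w hw => by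
      obtain ⟨y, hy, z, hz, rfl⟩ := Submodule.mem_sup.1 (hsup ▸ hw)
      rw [map_add, LinearMap.add_apply, hB _ _ (mem_bperp.1 hy.2 x hxS), hx z hz, add_zero]
  exact ⟨D, hDT, le_antisymm hSD.finrank_le hDS.finrank_le, hDS, hSD⟩

theorem SpaceOpp.symm (hB : B.IsRefl) (hr : finrank F S = finrank F T) (h : SpaceOpp B S T) :
    SpaceOpp B T S := by
  obtain ⟨D, hD, hfr, -, hTD⟩ := h.exists_le_finrank_eq hB
  rwa [Submodule.eq_of_le_of_finrank_eq hD (hfr.trans hr.symm)] at hTD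

theorem SpaceOpp.exists_le_finrank_eq_of_le (hB : B.IsRefl) (hr : finrank F S = finrank F T)
    (h : SpaceOpp B S T) (hU : U ≤ S) : ∃ D ≤ T, finrank F D = finrank F U ∧ SpaceOpp B U D := by
  obtain ⟨D, hD, hfr, -, hUD⟩ := ((h.symm hB hr).mono_right hU).exists_le_finrank_eq hB
  exact ⟨D, hD, hfr, hUD⟩

theorem exists_mem_bperp_ne_zero (hB : B.IsRefl) (hnd : B.Nondegenerate) {c : V} (hc : c ∉ W) :
    ∃ d ∈ bperp B W, B c d ≠ 0 := by
  by_contra! h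
  refine hc ?_
  rw [← LinearMap.BilinForm.orthogonal_orthogonal hnd hB W, ← bperp_eq_orthogonal B W]
  exact fun d hd => hB _ _ (h d hd)

theorem SpaceOpp.exists_ge_finrank_succ_of_lt (hB : B.IsAlt) (hnd : B.Nondegenerate)
    (h : SpaceOpp B S T) (hT : IsTotIso B T) (hU : IsTotIso B U) (hSU : S < U) :
    ∃ T' ≥ T, IsTotIso B T' ∧ finrank F T' = finrank F T + 1 ∧ SpaceOpp B U T' := by
  obtain ⟨c, hcU, hcS⟩ := SetLike.exists_of_lt hSU
  have hc : c ∉ S ⊔ T := by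
    intro hc
    obtain ⟨x, hx, y, hy, rfl⟩ := Submodule.mem_sup.1 hc
    have hyU : y ∈ U := (U.add_mem_iff_right (hSU.le hx)).1 hcU
    have hy0 : y = 0 := h.eq_zero hy fun w hw => hU w (hSU.le hw) y hyU
    exact hcS (by rwa [hy0, add_zero])
  obtain ⟨d, hd, hcd⟩ := exists_mem_bperp_ne_zero hB.isRefl hnd hc
  have hdS : ∀ w ∈ S, B w d = 0 := mem_bperp.1 (bperp_anti le_sup_left hd)
  have hdT : d ∉ T := fun hdT => hcd (by rw [h.eq_zero hdT hdS, map_zero])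
  refine ⟨T ⊔ F ∙ d, le_sup_left, hT.sup_span_singleton hB (bperp_anti le_sup_right hd),
    Submodule.finrank_sup_span_singleton hdT, spaceOpp_of_forall_eq_zero fun x hx hxU => ?_⟩
  obtain ⟨y, hy, _, hz, rfl⟩ := Submodule.mem_sup.1 hx
  obtain ⟨a, rfl⟩ := Submodule.mem_span_singleton.1 hz
  obtain rfl : y = 0 := h.eq_zero hy fun w hw => by simpa [hdS w hw] using hxU w (hSU.le hw)
  have ha : a = 0 := by simpa [hcd] using hxU c hcU
  simp [ha]

end FiniteDimensional

end Forms

section Flags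

variable {F V : Type} [Field F] [AddCommGroup V] [Module F V] {B : V →ₗ[F] V →ₗ[F] F}
  {n s : ℕ} {c : ℕ → Submodule F V} {S : Submodule F V} {J : Finset ℕ}

/-- A sequence of subspaces whose first `n + 1` members form a complete flag of a totally
isotropic `n`-space; when `dim V = 2 * n` this is a chamber together with the zero space. The
members of index above `n` carry no information beyond monotonicity. -/
structure IsCompleteFlag (B : V →ₗ[F] V →ₗ[F] F) (n : ℕ) (c : ℕ → Submodule F V) : Prop where
  monotone : Monotone c
  isotropic : ∀ k ≤ n, IsTotIso B (c k)
  finrank_eq : ∀ k ≤ n, finrank F (c k) = k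

theorem IsCompleteFlag.lt_succ (hc : IsCompleteFlag B n c) {k : ℕ} (hk : k < n) :
    c k < c (k + 1) := by
  refine (hc.monotone k.le_succ).lt_of_ne fun heq => k.succ_ne_self ?_
  calc
    k + 1 = finrank F (c (k + 1)) := (hc.finrank_eq (k + 1) hk).symm
    _ = finrank F (c k) := by rw [heq]
    _ = k := hc.finrank_eq k hk.le

/-- The flag of type `J` formed by the members of a complete flag with index in `J`. -/
noncomputable def IsCompleteFlag.restrict (hc : IsCompleteFlag B n c) (hJ : ∀ j ∈ J, j ≤ n) :
    SFlag B J where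
  space j := if j ∈ J then c j else ⊥
  isotropic j hj := by rw [if_pos hj]; exact hc.isotropic j (hJ j hj)
  finrank_eq j hj := by rw [if_pos hj]; exact hc.finrank_eq j (hJ j hj)
  mono i hi j hj hij := by rw [if_pos hi, if_pos hj]; exact hc.monotone hij
  eq_bot _ hj := if_neg hj

theorem IsCompleteFlag.restrict_space (hc : IsCompleteFlag B n c) (hJ : ∀ j ∈ J, j ≤ n) {j : ℕ}
    (hj : j ∈ J) : (hc.restrict hJ).space j = c j :=
  if_pos hj

variable [FiniteDimensional F V]

theorem IsCompleteFlag.exists_opposite (hB : B.IsAlt) (hnd : B.Nondegenerate)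
    (hc : IsCompleteFlag B n c) (hs : s ≤ n) (hS : IsTotIso B S) (hr : finrank F S = s)
    (hop : SpaceOpp B (c s) S) :
    ∃ c', IsCompleteFlag B n c' ∧ c' s = S ∧ ∀ k ≤ n, SpaceOpp B (c k) (c' k) := by
  obtain ⟨c', hmono, hc's, hc'⟩ := exists_monotone_of_step_le
    (P := fun k W => IsTotIso B W ∧ finrank F W = k ∧ SpaceOpp B (c k) W) hs ⟨hS, hr, hop⟩
    (by
      rintro k hk W ⟨hW, hrW, hopW⟩
      obtain ⟨D, hD, hrD, hopD⟩ := hopW.exists_le_finrank_eq_of_le hB.isRefl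
        ((hc.finrank_eq _ (by lia)).trans hrW.symm) (hc.monotone k.le_succ)
      exact ⟨D, hD, hW.mono hD, hrD.trans (hc.finrank_eq k (by lia)), hopD⟩)
    (by
      rintro k - hk W ⟨hW, hrW, hopW⟩
      obtain ⟨D, hD, hisoD, hrD, hopD⟩ :=
        hopW.exists_ge_finrank_succ_of_lt hB hnd hW (hc.isotropic (k + 1) hk) (hc.lt_succ hk)
      exact ⟨D, hD, hisoD, by rw [hrD, hrW], hopD⟩)
  exact ⟨c', ⟨hmono, fun k hk => (hc' k hk).1, fun k hk => (hc' k hk).2.1⟩, hc's,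
    fun k hk => (hc' k hk).2.2⟩

theorem exists_isTotIso_finrank_succ_of_isChain (hB : B.IsAlt) {𝒲 : Set (Submodule F V)}
    (hchain : IsChain (· ≤ ·) 𝒲) (hiso : ∀ A ∈ 𝒲, IsTotIso B A) {W : Submodule F V}
    (hW : IsTotIso B W) (hdim : 2 * finrank F W < finrank F V)
    (hcomp : ∀ A ∈ 𝒲, A ≤ W ∨ W ≤ A) :
    ∃ W' ≥ W, IsTotIso B W' ∧ finrank F W' = finrank F W + 1 ∧ ∀ A ∈ 𝒲, A ≤ W' ∨ W' ≤ A := by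
  have hcomp' : ∀ A ∈ 𝒲, A ≤ W ∨ W < A := fun A hA =>
    (hcomp A hA).elim .inl fun h => h.eq_or_lt.imp_left Eq.ge
  -- `U` is the least member of `𝒲` strictly above `W` if there is one, and `Wᗮ` otherwise.
  obtain ⟨U, hWU, hUperp, hU⟩ : ∃ U, W < U ∧ U ≤ bperp B W ∧ ∀ A ∈ 𝒲, A ≤ W ∨ U ≤ A := by
    by_cases! hne : ∃ A, A ∈ 𝒲 ∧ W < A
    · obtain ⟨U, ⟨hU𝒲, hWU⟩, hmin⟩ := exists_minimal_of_wellFoundedLT _ hne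
      refine ⟨U, hWU, (isTotIso_iff_le_bperp.1 (hiso U hU𝒲)).trans (bperp_anti hWU.le), ?_⟩
      exact fun A hA => (hcomp' A hA).imp_right fun hWA =>
        (hchain.total hU𝒲 hA).elim id (hmin ⟨hA, hWA⟩)
    · exact ⟨bperp B W, hW.lt_bperp hdim, le_rfl, fun A hA => (hcomp' A hA).imp_right
        fun hWA => absurd hWA (hne A hA)⟩
  obtain ⟨d, hdU, hdW⟩ := SetLike.exists_of_lt hWU
  have hle : W ⊔ F ∙ d ≤ U := sup_le hWU.le ((Submodule.span_singleton_le_iff_mem d U).2 hdU)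
  exact ⟨W ⊔ F ∙ d, le_sup_left, hW.sup_span_singleton hB (hUperp hdU),
    Submodule.finrank_sup_span_singleton hdW,
    fun A hA => (hU A hA).imp le_sup_of_le_left hle.trans⟩

theorem exists_isCompleteFlag_of_isChain (hB : B.IsAlt) (hn : 2 * n ≤ finrank F V)
    {𝒲 : Set (Submodule F V)} (hchain : IsChain (· ≤ ·) 𝒲) (hiso : ∀ A ∈ 𝒲, IsTotIso B A)
    (hrank : ∀ A ∈ 𝒲, finrank F A ≤ n) :
    ∃ c, IsCompleteFlag B n c ∧ ∀ A ∈ 𝒲, c (finrank F A) = A := by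
  obtain ⟨c, hmono, -, hc⟩ := exists_monotone_of_step_le
    (P := fun k W => IsTotIso B W ∧ finrank F W = k ∧ ∀ A ∈ 𝒲, A ≤ W ∨ W ≤ A) n.zero_le
    ⟨isTotIso_iff_le_bperp.2 bot_le, finrank_bot F V, fun _ _ => .inr bot_le⟩
    (fun _ hk => absurd hk (Nat.not_lt_zero _))
    (by
      rintro k - hk W ⟨hW, rfl, hcomp⟩
      exact exists_isTotIso_finrank_succ_of_isChain hB hchain hiso hW (by lia) hcomp)
  refine ⟨c, ⟨hmono, fun k hk => (hc k hk).1, fun k hk => (hc k hk).2.1⟩, fun A hA => ?_⟩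
  obtain ⟨-, hr, hcomp⟩ := hc _ (hrank A hA)
  exact (hcomp A hA).elim (fun h => (Submodule.eq_of_le_of_finrank_eq h hr.symm).symm)
    (fun h => Submodule.eq_of_le_of_finrank_eq h hr)

theorem SFlag.exists_isCompleteFlag (hB : B.IsAlt) (hn : 2 * n ≤ finrank F V)
    (hJ : ∀ j ∈ J, j ≤ n) (C : SFlag B J) :
    ∃ c, IsCompleteFlag B n c ∧ ∀ j ∈ J, c j = C.space j := by
  have hchain : IsChain (· ≤ ·) (C.space '' J) := by
    rintro _ ⟨i, hi, rfl⟩ _ ⟨j, hj, rfl⟩ -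
    exact (le_total i j).imp (C.mono i hi j hj) (C.mono j hj i hi)
  obtain ⟨c, hc, hcC⟩ := exists_isCompleteFlag_of_isChain hB hn hchain
    (Set.forall_mem_image.2 C.isotropic)
    (Set.forall_mem_image.2 fun j hj => (C.finrank_eq j hj).trans_le (hJ j hj))
  refine ⟨c, hc, fun j hj => ?_⟩
  simpa only [C.finrank_eq j hj] using hcC _ (Set.mem_image_of_mem _ hj)

theorem SFlag.exists_flagOpp (hB : B.IsAlt) (hnd : B.Nondegenerate)
    (hJ : ∀ j ∈ J, 2 * j ≤ finrank F V) (C : SFlag B J) (hs : s ∈ J) (hS : IsTotIso B S)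
    (hr : finrank F S = s) (hop : SpaceOpp B (C.space s) S) :
    ∃ C' : SFlag B J, C'.space s = S ∧ FlagOpp C C' := by
  have hJn : ∀ j ∈ J, j ≤ finrank F V / 2 := fun j hj => by grind
  obtain ⟨c, hc, hcC⟩ := C.exists_isCompleteFlag hB (Nat.mul_div_le _ 2) hJn
  obtain ⟨c', hc', hc's, hopp⟩ := hc.exists_opposite hB hnd (hJn s hs) hS hr (by rwa [hcC s hs])
  refine ⟨hc'.restrict hJn, (hc'.restrict_space hJn hs).trans hc's, fun j hj => ?_⟩
  rw [hc'.restrict_space hJn hj, ← hcC j hj]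
  exact hopp j (hJn j hj)

theorem exists_sFlag_of_le (hB : B.IsAlt) (hJ : ∀ j ∈ J, 2 * j ≤ finrank F V)
    {D : Submodule F V} (hDS : D ≤ S) (hS : IsTotIso B S) (hD : finrank F D ∈ J)
    (hSJ : finrank F S ∈ J) :
    ∃ C : SFlag B J, C.space (finrank F D) = D ∧ C.space (finrank F S) = S := by
  have hJn : ∀ j ∈ J, j ≤ finrank F V / 2 := fun j hj => by grind
  obtain ⟨c, hc, hcDS⟩ := exists_isCompleteFlag_of_isChain hB (Nat.mul_div_le _ 2)
    (IsChain.pair hDS) (by simp [hS, hS.mono hDS]) (by simp [hJn _ hD, hJn _ hSJ])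
  exact ⟨hc.restrict hJn, (hc.restrict_space hJn hD).trans (hcDS D (by simp)),
    (hc.restrict_space hJn hSJ).trans (hcDS S (by simp))⟩

end Flags

section Heavy

variable {F V : Type} [Field F] [AddCommGroup V] [Module F V] [FiniteDimensional F V]
  {B : V →ₗ[F] V →ₗ[F] F} {J : Finset ℕ} {𝓕 : Set (SFlag B J)}

theorem IsEKRFlags.not_spaceOpp_of_heavy (hB : B.IsAlt) (hnd : B.Nondegenerate)
    (hJ : ∀ j ∈ J, 2 * j ≤ finrank F V) (hEKR : IsEKRFlags 𝓕) {s : ℕ} (hs : s ∈ J)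
    {S : Submodule F V} (hS : IsTotIso B S) (hr : finrank F S = s) (hH : Heavy 𝓕 s S)
    {C : SFlag B J} (hC : C ∈ 𝓕) : ¬ SpaceOpp B (C.space s) S := by
  intro hop
  obtain ⟨C', hC's, hopp⟩ := C.exists_flagOpp hB hnd hJ hs hS hr hop
  exact hEKR C hC C' (hH C' hC's) hopp

theorem IsEKRFlags.not_spaceOpp_of_heavy_of_heavy (hB : B.IsAlt) (hnd : B.Nondegenerate)
    (hJ : ∀ j ∈ J, 2 * j ≤ finrank F V) (hEKR : IsEKRFlags 𝓕) {s₁ s₂ : ℕ} (hs₁ : s₁ ∈ J)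
    (hs₂ : s₂ ∈ J) {S₁ S₂ : Submodule F V} (hS₁ : IsTotIso B S₁) (hr₁ : finrank F S₁ = s₁)
    (hH₁ : Heavy 𝓕 s₁ S₁) (hS₂ : IsTotIso B S₂) (hr₂ : finrank F S₂ = s₂)
    (hH₂ : Heavy 𝓕 s₂ S₂) : ¬ SpaceOpp B S₂ S₁ := by
  intro hop
  obtain ⟨D, hD, hrD, hDS₁, -⟩ := hop.exists_le_finrank_eq hB.isRefl
  obtain ⟨C, hCD, hCS₂⟩ := exists_sFlag_of_le hB hJ hD hS₂
    (hrD ▸ hr₁ ▸ hs₁) (hr₂ ▸ hs₂)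
  refine hEKR.not_spaceOpp_of_heavy hB hnd hJ hs₁ hS₁ hr₁ hH₁ (hH₂ C (hr₂ ▸ hCS₂)) ?_
  rwa [← hr₁, ← hrD, hCD]

end Heavy

theorem stmt_7_general {F V : Type} [Field F] [AddCommGroup V] [Module F V]
    [FiniteDimensional F V] (B : V →ₗ[F] V →ₗ[F] F) (halt : IsAltForm B) (hnd : NondegForm B)
    (J : Finset ℕ) (hJ : ∀ j ∈ J, 2 * j ≤ finrank F V)
    (𝓕 : Set (SFlag B J)) (hEKR : IsEKRFlags 𝓕) :
    (∀ s₁ ∈ J, ∀ s₂ ∈ J, ∀ S₁ S₂ : Submodule F V,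
      IsTotIso B S₁ → finrank F S₁ = s₁ → Heavy 𝓕 s₁ S₁ →
      IsTotIso B S₂ → finrank F S₂ = s₂ → Heavy 𝓕 s₂ S₂ →
      S₁ ⊓ bperp B S₂ ≠ ⊥)
    ∧
    (∀ s ∈ J, ∀ S : Submodule F V,
      IsTotIso B S → finrank F S = s → Heavy 𝓕 s S →
      ∀ C ∈ 𝓕, bperp B (SFlag.space C s) ⊓ S ≠ ⊥) := by
  have hB : B.IsAlt := halt
  have hnd' : B.Nondegenerate := hB.isRefl.nondegenerate_iff_separatingLeft.2 hnd
  constructor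
  · intro s₁ hs₁ s₂ hs₂ S₁ S₂ hS₁ hr₁ hH₁ hS₂ hr₂ hH₂
    rw [inf_comm]
    exact hEKR.not_spaceOpp_of_heavy_of_heavy hB hnd' hJ hs₁ hs₂ hS₁ hr₁ hH₁ hS₂ hr₂ hH₂
  · intro s hs S hS hr hH C hC
    exact hEKR.not_spaceOpp_of_heavy hB hnd' hJ hs hS hr hH hC

/-- for a maximum EKR-set of chambers, (a) two heavy totally isotropic
subspaces are never in "skew" position, and (b) a heavy `s`-space meets the perp of
the `s`-space of every chamber of the set nontrivially. -/
theorem stmt_7 {F V : Type} [Field F] [Fintype F] [AddCommGroup V] [Module F V]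
    [FiniteDimensional F V] (n q : ℕ) (hn : 3 ≤ n) (hq : Fintype.card F = q)
    (B : V →ₗ[F] V →ₗ[F] F) (halt : IsAltForm B) (hnd : NondegForm B)
    (hdim : Module.finrank F V = 2 * n)
    (𝓕 : Set (SFlag B (Finset.Icc 1 n))) (hEKR : IsEKRFlags 𝓕)
    (hmax : ∀ 𝓖 : Set (SFlag B (Finset.Icc 1 n)), IsEKRFlags 𝓖 → 𝓖.ncard ≤ 𝓕.ncard) :
    -- (a)
    (∀ s₁ ∈ Finset.Icc 1 n, ∀ s₂ ∈ Finset.Icc 1 n,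
      ∀ S₁ S₂ : Submodule F V,
        IsTotIso B S₁ → Module.finrank F S₁ = s₁ → Heavy 𝓕 s₁ S₁ →
        IsTotIso B S₂ → Module.finrank F S₂ = s₂ → Heavy 𝓕 s₂ S₂ →
        S₁ ⊓ bperp B S₂ ≠ ⊥)
    ∧
    -- (b)
    (∀ s ∈ Finset.Icc 1 n, ∀ S : Submodule F V,
      IsTotIso B S → Module.finrank F S = s → Heavy 𝓕 s S →
      ∀ C ∈ 𝓕, bperp B (SFlag.space C s) ⊓ S ≠ ⊥) :=
  stmt_7_general B halt hnd (Finset.Icc 1 n)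
    (fun j hj => by rw [hdim]; exact Nat.mul_le_mul_left 2 (Finset.mem_Icc.1 hj).2) 𝓕 hEKR
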